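/- Let C ⊆ F_{q^m}^n be an F_{q^m}-linear code of dimension k and n' a positive integer. Then the following holds if and only if n' ≥ d_{R,k}(C): there exist an F_{q^m}-linear code C' ⊆ F_{q^m}^{n'}, Galois closed subspaces V ⊆ F_{q^m}^n with C ⊆ V and V' ⊆ F_{q^m}^{n'} with C' ⊆ V', and an F_{q^m}-linear isomorphism φ : V → V' such that φ(C) = C' and wt_R(φ(v)) = wt_R(v) for all v ∈ V. -/

import Mathlib

open Submodule Module

namespace RankPaper

variable {n : ℕ}

/-- The coordinatewise `q^i`-th power map on `Fqm^n`. -/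
def qpowMap (q i : ℕ) {Fqm : Type} [Field Fqm] (v : Fin n → Fqm) : Fin n → Fqm :=
  fun j => v j ^ q ^ i

/-- The Galois closure `D* = Σ_{i=0}^{m-1} D^{q^i}` of a subspace (as the span of the
union of the images of `D` under the coordinatewise `q^i`-power maps, `0 ≤ i < m`). -/
def galClosure (q m : ℕ) {Fqm : Type} [Field Fqm] (D : Submodule Fqm (Fin n → Fqm)) :
    Submodule Fqm (Fin n → Fqm) :=
  Submodule.span Fqm (⋃ i ∈ Finset.range m, qpowMap q i '' (D : Set (Fin n → Fqm)))

/-- `D` is Galois closed if `D = D*`. -/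
def GaloisClosed (q m : ℕ) {Fqm : Type} [Field Fqm] (D : Submodule Fqm (Fin n → Fqm)) : Prop :=
  galClosure q m D = D

/-- Rank weight of a subspace: `wt_R(D) = dim_{Fqm} D*`. -/
noncomputable def wtR (q m : ℕ) {Fqm : Type} [Field Fqm]
    (D : Submodule Fqm (Fin n → Fqm)) : ℕ :=
  finrank Fqm (galClosure q m D)

/-- Rank weight of a vector: `wt_R(c) = wt_R(span {c})`. -/
noncomputable def wtRv (q m : ℕ) {Fqm : Type} [Field Fqm] (c : Fin n → Fqm) : ℕ :=
  wtR q m (Submodule.span Fqm ({c} : Set (Fin n → Fqm)))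

/-- Hamming weight of a subspace: the number of coordinates where some element is nonzero. -/
noncomputable def wtH {Fqm : Type} [Field Fqm] (D : Submodule Fqm (Fin n → Fqm)) : ℕ :=
  {i : Fin n | ∃ d ∈ D, d i ≠ 0}.ncard

/-- `r`-th generalized rank weight of a linear code. -/
noncomputable def dR (q m : ℕ) {Fqm : Type} [Field Fqm]
    (C : Submodule Fqm (Fin n → Fqm)) (r : ℕ) : ℕ :=
  sInf { dv | ∃ V : Submodule Fqm (Fin n → Fqm),
    GaloisClosed q m V ∧ r ≤ finrank Fqm ↥(C ⊓ V) ∧ dv = finrank Fqm ↥V }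

/-- `r`-th generalized Hamming weight of a linear code. -/
noncomputable def dH {Fqm : Type} [Field Fqm]
    (C : Submodule Fqm (Fin n → Fqm)) (r : ℕ) : ℕ :=
  sInf { w | ∃ D : Submodule Fqm (Fin n → Fqm), D ≤ C ∧ finrank Fqm ↥D = r ∧ w = wtH D }

/-- `r`-th relative generalized rank weight of a nested code pair. -/
noncomputable def MR (q m : ℕ) {Fqm : Type} [Field Fqm]
    (C₁ C₂ : Submodule Fqm (Fin n → Fqm)) (r : ℕ) : ℕ :=
  sInf { dv | ∃ V : Submodule Fqm (Fin n → Fqm), GaloisClosed q m V ∧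
    r ≤ finrank Fqm ↥(C₁ ⊓ V) - finrank Fqm ↥(C₂ ⊓ V) ∧ dv = finrank Fqm ↥V }

/-- Minimum rank distance of an arbitrary (possibly nonlinear) code. -/
noncomputable def dRset (q m : ℕ) {Fqm : Type} [Field Fqm] (C : Set (Fin n → Fqm)) : ℕ :=
  sInf { w | ∃ c₁ ∈ C, ∃ c₂ ∈ C, c₁ ≠ c₂ ∧ w = wtRv q m (c₁ - c₂) }

/-- The linear functional `x ↦ Σ_j x_j y_j` (dot product with `y`). -/
def dotLin {K : Type} [Field K] (y : Fin n → K) : (Fin n → K) →ₗ[K] K :=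
  ∑ j, y j • LinearMap.proj j

/-- Orthogonal complement of a subspace with respect to the standard bilinear form. -/
def perp {K : Type} [Field K] (L : Submodule K (Fin n → K)) : Submodule K (Fin n → K) :=
  ⨅ y ∈ L, LinearMap.ker (dotLin y)

/-- The coordinatewise inclusion `Fq^n → Fqm^n`. -/
def embFq (Fq Fqm : Type) [Field Fq] [Field Fqm] [Algebra Fq Fqm] :
    (Fin n → Fq) →ₗ[Fq] (Fin n → Fqm) :=
  LinearMap.pi fun j => (Algebra.linearMap Fq Fqm).comp (LinearMap.proj j)

/-- `V_L = L ⊗ Fqm`, the `Fqm`-span of `L ⊆ Fq^n` inside `Fqm^n`. -/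
def VL {Fq : Type} (Fqm : Type) [Field Fq] [Field Fqm] [Algebra Fq Fqm]
    (L : Submodule Fq (Fin n → Fq)) : Submodule Fqm (Fin n → Fqm) :=
  Submodule.span Fqm (embFq Fq Fqm '' (L : Set (Fin n → Fq)))

/-- Rank-punctured code `C^L`: the image of `C` in `Fqm^n / V_{L^⊥}`. -/
noncomputable def punct {Fq Fqm : Type} [Field Fq] [Field Fqm] [Algebra Fq Fqm]
    (L : Submodule Fq (Fin n → Fq)) (C : Submodule Fqm (Fin n → Fqm)) :
    Submodule Fqm ((Fin n → Fqm) ⧸ VL Fqm (perp L)) :=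
  Submodule.map (VL Fqm (perp L)).mkQ C

/-!
The existence of an equivalence bounds `d_{R,k}(C)`, because it forces `dim V = dim V' ≤ n'`.
Conversely, let `V ⊇ C` be Galois closed of dimension `d = d_{R,k}(C) ≤ n'`. Since `V` is stable
under the coordinatewise trace, Galois descent gives it a basis with entries in `F_q`, that is, a
parametrization `F_{q^m}^d → V` commuting with the power maps. Padding with zeros is another such
map `F_{q^m}^d → F_{q^m}^{n'}`, and injective linear maps commuting with the power maps commute with
Galois closures, so they preserve rank weights.
-/

section Equivariant

variable {q m d : ℕ} {F : Type} [Field F] {D : Submodule F (Fin n → F)}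

theorem qpowMap_mem_galClosure {i : ℕ} (hi : i < m) {v : Fin n → F} (hv : v ∈ D) :
    qpowMap q i v ∈ galClosure q m D :=
  subset_span (Set.mem_biUnion (Finset.mem_range.2 hi) (Set.mem_image_of_mem _ hv))

theorem qpowMap_zero (v : Fin n → F) : qpowMap q 0 v = v := by
  ext j
  simp [qpowMap]

theorem le_galClosure (hm : 0 < m) : D ≤ galClosure q m D := fun v hv => by
  simpa only [qpowMap_zero] using qpowMap_mem_galClosure (q := q) hm hv

theorem galoisClosed_top (hm : 0 < m) : GaloisClosed q m (⊤ : Submodule F (Fin n → F)) :=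
  top_le_iff.1 (le_galClosure hm)

variable {A : (Fin d → F) →ₗ[F] (Fin n → F)}

theorem galClosure_map (hA : ∀ i, Function.Semiconj A (qpowMap q i) (qpowMap q i))
    (D : Submodule F (Fin d → F)) :
    galClosure q m (D.map A) = (galClosure q m D).map A := by
  simp only [galClosure, map_span, Set.image_iUnion, map_coe, Set.image_image, (hA _).eq]

theorem GaloisClosed.map {D : Submodule F (Fin d → F)} (hD : GaloisClosed q m D)
    (hA : ∀ i, Function.Semiconj A (qpowMap q i) (qpowMap q i)) :
    GaloisClosed q m (D.map A) := by
  rw [GaloisClosed, galClosure_map hA, hD]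

theorem galoisClosed_range (hm : 0 < m)
    (hA : ∀ i, Function.Semiconj A (qpowMap q i) (qpowMap q i)) :
    GaloisClosed q m (LinearMap.range A) :=
  LinearMap.range_eq_map A ▸ (galoisClosed_top hm).map hA

theorem wtR_map (hA : ∀ i, Function.Semiconj A (qpowMap q i) (qpowMap q i))
    (hinj : Function.Injective A) (D : Submodule F (Fin d → F)) :
    wtR q m (D.map A) = wtR q m D := by
  rw [wtR, galClosure_map hA, wtR]
  exact (equivMapOfInjective A hinj _).finrank_eq.symm

theorem wtRv_apply (hA : ∀ i, Function.Semiconj A (qpowMap q i) (qpowMap q i))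
    (hinj : Function.Injective A) (x : Fin d → F) :
    wtRv q m (A x) = wtRv q m x := by
  rw [wtRv, wtRv, ← wtR_map hA hinj, map_span, Set.image_singleton]

theorem semiconj_extendByZero_qpowMap {n' : ℕ} (hq : q ≠ 0) (s : Fin n → Fin n') (i : ℕ) :
    Function.Semiconj (Function.ExtendByZero.linearMap F s) (qpowMap q i) (qpowMap q i) := by
  intro x
  have hzero : (fun a : F => a ^ q ^ i) ∘ (0 : Fin n' → F) = 0 :=
    funext fun _ => zero_pow (pow_ne_zero i hq)
  ext j
  have hextend := Function.apply_extend (g := x) (fun a : F => a ^ q ^ i) s 0 j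
  rw [hzero] at hextend
  exact hextend.symm

end Equivariant

section GeneralizedRankWeight

variable {q m : ℕ} {F : Type} [Field F]

theorem dR_finrank_le {C V : Submodule F (Fin n → F)} (hV : GaloisClosed q m V) (hCV : C ≤ V) :
    dR q m C (finrank F C) ≤ finrank F V :=
  Nat.sInf_le ⟨V, hV, by rw [inf_eq_left.2 hCV], rfl⟩

theorem exists_galoisClosed_finrank_eq_dR (hm : 0 < m) (C : Submodule F (Fin n → F)) :
    ∃ V, GaloisClosed q m V ∧ C ≤ V ∧ finrank F V = dR q m C (finrank F C) := by
  obtain ⟨V, hV, hCV, hdim⟩ : dR q m C (finrank F C) ∈ {d | ∃ V : Submodule F (Fin n → F),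
      GaloisClosed q m V ∧ finrank F C ≤ finrank F ↥(C ⊓ V) ∧ d = finrank F V} :=
    Nat.sInf_mem ⟨_, ⊤, galoisClosed_top hm, by rw [inf_top_eq], rfl⟩
  exact ⟨V, hV, inf_eq_left.1 (eq_of_le_of_finrank_le inf_le_left hCV), hdim.symm⟩

end GeneralizedRankWeight

section Descent

variable {K L : Type} [Field K] [Field L] [Algebra K L]

theorem sum_traceDual_smul_embFq_trace [FiniteDimensional K L] [Algebra.IsSeparable K L]
    {ι : Type*} [Fintype ι] [DecidableEq ι] (b : Basis ι K L) (v : Fin n → L) :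
    ∑ i, b.traceDual i • embFq K L (Algebra.trace K L ∘ (b i • v)) = v := by
  ext j
  have hrepr := b.traceDual.sum_repr (v j)
  simp only [Basis.traceDual_repr_apply, Algebra.traceForm_apply, Algebra.smul_def] at hrepr
  simpa [embFq, mul_comm] using hrepr

theorem VL_comap_embFq_of_trace_mem [FiniteDimensional K L] [Algebra.IsSeparable K L]
    {V : Submodule L (Fin n → L)} (hV : ∀ v ∈ V, embFq K L (Algebra.trace K L ∘ v) ∈ V) :
    VL L ((V.restrictScalars K).comap (embFq K L)) = V := by
  refine le_antisymm (span_le.2 (Set.image_subset_iff.2 fun _ hu => hu)) fun v hv => ?_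
  rw [← sum_traceDual_smul_embFq_trace (finBasis K L) v]
  exact sum_mem fun i _ => smul_mem _ _ <| subset_span <|
    Set.mem_image_of_mem _ <| hV _ <| V.smul_mem _ hv

theorem embFq_trace_eq_sum_qpowMap [Finite L] (v : Fin n → L) :
    embFq K L (Algebra.trace K L ∘ v) =
      ∑ i ∈ Finset.range (finrank K L), qpowMap (Nat.card K) i v := by
  ext j
  simpa [embFq, qpowMap] using FiniteField.algebraMap_trace_eq_sum_pow K L (v j)

theorem GaloisClosed.VL_comap_embFq [Finite L] {V : Submodule L (Fin n → L)}
    (hV : GaloisClosed (Nat.card K) (finrank K L) V) :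
    VL L ((V.restrictScalars K).comap (embFq K L)) = V := by
  have : Finite K := .of_injective _ (algebraMap K L).injective
  refine VL_comap_embFq_of_trace_mem fun v hv => ?_
  rw [embFq_trace_eq_sum_qpowMap]
  exact sum_mem fun i hi => hV.le (qpowMap_mem_galClosure (Finset.mem_range.1 hi) hv)

theorem semiconj_linearCombination_embFq_qpowMap [Finite K] {d : ℕ} (u : Fin d → Fin n → K)
    (i : ℕ) :
    Function.Semiconj (Fintype.linearCombination L fun a => embFq K L (u a))
      (qpowMap (Nat.card K) i) (qpowMap (Nat.card K) i) := by
  have := Fintype.ofFinite K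
  have hfrob (x : L) : x ^ Nat.card K ^ i = (FiniteField.frobeniusAlgHom K L ^ i) x := by
    rw [AlgHom.coe_pow, FiniteField.coe_frobeniusAlgHom, pow_iterate, Nat.card_eq_fintype_card]
  intro x
  ext j
  simp only [Fintype.linearCombination_apply, qpowMap, hfrob, Finset.sum_apply, Pi.smul_apply,
    smul_eq_mul, map_sum, map_mul]
  simp [embFq]

theorem GaloisClosed.exists_injective_semiconj_range_eq [Finite L] {V : Submodule L (Fin n → L)}
    (hV : GaloisClosed (Nat.card K) (finrank K L) V) :
    ∃ (d : ℕ) (A : (Fin d → L) →ₗ[L] (Fin n → L)), Function.Injective A ∧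
      (∀ i, Function.Semiconj A (qpowMap (Nat.card K) i) (qpowMap (Nat.card K) i)) ∧
      LinearMap.range A = V := by
  have : Finite K := .of_injective _ (algebraMap K L).injective
  obtain ⟨w, hw, hspan, hli⟩ := exists_fun_fin_finrank_span_eq L
    (embFq K L '' ((V.restrictScalars K).comap (embFq K L) : Set (Fin n → K)))
  choose u _ hu using hw
  obtain rfl : (fun a => embFq K L (u a)) = w := funext hu
  exact ⟨_, _, linearIndependent_iff_injective_fintypeLinearCombination.1 hli,
    semiconj_linearCombination_embFq_qpowMap u,
    (Fintype.range_linearCombination L _).trans (hspan.trans hV.VL_comap_embFq)⟩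

theorem GaloisClosed.exists_linearEquiv_wtRv_eq [Finite L] {V : Submodule L (Fin n → L)}
    (hV : GaloisClosed (Nat.card K) (finrank K L) V) {n' : ℕ} (hn' : finrank L V ≤ n') :
    ∃ (V' : Submodule L (Fin n' → L)) (φ : V ≃ₗ[L] V'),
      GaloisClosed (Nat.card K) (finrank K L) V' ∧
      ∀ v : V, wtRv (Nat.card K) (finrank K L) (φ v : Fin n' → L) =
        wtRv (Nat.card K) (finrank K L) (v : Fin n → L) := by
  have : Finite K := .of_injective _ (algebraMap K L).injective
  obtain ⟨d, A, hA, hAq, rfl⟩ := hV.exists_injective_semiconj_range_eq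
  have hd : d ≤ n' := by simpa [LinearMap.finrank_range_of_inj hA] using hn'
  let B := Function.ExtendByZero.linearMap L (Fin.castLE hd)
  have hB : Function.Injective B := Function.extend_injective (Fin.castLE_injective hd) 0
  have hBq := semiconj_extendByZero_qpowMap (F := L) (Nat.card_pos (α := K)).ne' (Fin.castLE hd)
  let eA := LinearEquiv.ofInjective A hA
  let eB := LinearEquiv.ofInjective B hB
  refine ⟨LinearMap.range B, eA.symm ≪≫ₗ eB, galoisClosed_range finrank_pos hBq, fun v => ?_⟩
  obtain ⟨x, rfl⟩ := eA.surjective v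
  rw [LinearEquiv.trans_apply, eA.symm_apply_apply]
  exact (wtRv_apply hBq hB x).trans (wtRv_apply hAq hA x).symm

end Descent

/-- a code of dimension `k` is rank-metric equivalent to a code of
length `n'` if and only if `n' ≥ d_{R,k}(C)`. -/
theorem stmt7 (q m n n' k : ℕ) (Fq Fqm : Type) [Field Fq] [Field Fqm] [Algebra Fq Fqm]
    [Finite Fqm] (hq : Nat.card Fq = q) (hm : finrank Fq Fqm = m) (hn' : 0 < n')
    (C : Submodule Fqm (Fin n → Fqm)) (hk : finrank Fqm C = k) :
    dR q m C k ≤ n' ↔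
      ∃ (C' : Submodule Fqm (Fin n' → Fqm)) (V : Submodule Fqm (Fin n → Fqm))
        (V' : Submodule Fqm (Fin n' → Fqm)) (φ : V ≃ₗ[Fqm] V'),
        GaloisClosed q m V ∧ GaloisClosed q m V' ∧ C ≤ V ∧ C' ≤ V' ∧
        Submodule.map (V'.subtype.comp φ.toLinearMap) (C.comap V.subtype) = C' ∧
        ∀ v : V, wtRv q m ((φ v : Fin n' → Fqm)) = wtRv q m (v : Fin n → Fqm) := by
  subst hq hm hk
  have hm : 0 < finrank Fq Fqm := finrank_pos
  constructor
  · intro hdR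
    obtain ⟨V, hV, hCV, hdim⟩ := exists_galoisClosed_finrank_eq_dR hm C
    obtain ⟨V', φ, hV', hwt⟩ := hV.exists_linearEquiv_wtRv_eq (hdim.trans_le hdR)
    refine ⟨_, V, V', φ, hV, hV', hCV, ?_, rfl, hwt⟩
    exact map_le_iff_le_comap.2 fun v _ => (φ v).2
  · rintro ⟨-, V, V', φ, hV, -, hCV, -⟩
    calc dR (Nat.card Fq) (finrank Fq Fqm) C (finrank Fqm C)
      _ ≤ finrank Fqm V := dR_finrank_le hV hCV
      _ = finrank Fqm V' := φ.finrank_eq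
      _ ≤ finrank Fqm (Fin n' → Fqm) := finrank_le V'
      _ = n' := finrank_fin_fun Fqm

end RankPaper
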